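/- arXiv:1802.08163 — 2 statements merged into one kernel-verified Lean document; each statement's English description precedes it below -/
import Mathlib

section
/- Let z₁ < ⋯ < z_K (K ≥ 2) be a grid with Cramér projection Π_C. Then Π_C is monotone with respect to stochastic dominance: for probability measures ν₁, ν₂ on ℝ, if ν₁ ≤ ν₂ (i.e. F_{ν₁}(y) ≥ F_{ν₂}(y) for all y ∈ ℝ), then Π_C ν₁ ≤ Π_C ν₂. -/
open MeasureTheory Filter Set

noncomputable section

/-- The cumulative distribution function of a measure on ℝ. -/
def cdfFn (ν : Measure ℝ) (y : ℝ) : ℝ := (ν (Set.Iic y)).toReal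

/-- The Cramér distance `ℓ₂` between two measures on ℝ. -/
def cramerDist (ν₁ ν₂ : Measure ℝ) : ℝ :=
  Real.sqrt (∫ x, (cdfFn ν₁ x - cdfFn ν₂ x) ^ 2)

/-- The hat functions associated with the grid `z 0 < z 1 < ⋯ < z (K-1)`. -/
def hatFn (K : ℕ) (z : ℕ → ℝ) (i : ℕ) (x : ℝ) : ℝ :=
  if i = 0 ∧ x ≤ z 0 then 1
  else if i = K - 1 ∧ z (K - 1) ≤ x then 1
  else if i + 1 < K ∧ z i ≤ x ∧ x ≤ z (i + 1) then (z (i + 1) - x) / (z (i + 1) - z i)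
  else if 0 < i ∧ z (i - 1) ≤ x ∧ x ≤ z i then (x - z (i - 1)) / (z i - z (i - 1))
  else 0

/-- The Cramér projection onto the grid `z 0 < z 1 < ⋯ < z (K-1)`. -/
def cramerProj (K : ℕ) (z : ℕ → ℝ) (ν : Measure ℝ) : Measure ℝ :=
  ∑ i ∈ Finset.range K, (ENNReal.ofReal (∫ w, hatFn K z i w ∂ν)) • Measure.dirac (z i)

/-- The distributional Bellman operator. -/
def bellmanOp {X A : Type} [Fintype X] [Fintype A] [MeasurableSpace X] [MeasurableSpace A]
    (γ : ℝ) (p : X × A → Measure (ℝ × X)) (pol : X → Measure A)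
    (η : X × A → Measure ℝ) (xa : X × A) : Measure ℝ :=
  (p xa).bind (fun rx' => ∑ a' : A, (pol rx'.2 {a'}) • (η (rx'.2, a')).map (fun t => rx'.1 + γ * t))

/-- The supremum-Cramér metric between return distribution functions. -/
def supCramer {X A : Type} [Fintype X] [Fintype A] (η μ : X × A → Measure ℝ) : ℝ :=
  ⨆ xa : X × A, cramerDist (η xa) (μ xa)

/-- Square-integrable tails of the CDF. -/
def sqIntTails (ν : Measure ℝ) : Prop :=
  IntegrableOn (fun x => (cdfFn ν x) ^ 2) (Set.Iic 0) ∧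
  IntegrableOn (fun x => (1 - cdfFn ν x) ^ 2) (Set.Ici 0)

/-- ramp functions: partial sums of hats -/
def rampFn (K : ℕ) (z : ℕ → ℝ) (m : ℕ) (x : ℝ) : ℝ :=
  if m = 0 then 0 else if K ≤ m then 1
  else max 0 (min 1 ((z m - x) / (z m - z (m - 1))))

lemma ramp_low {a b x : ℝ} (h : a < b) (hx : x ≤ a) :
    max 0 (min 1 ((b - x) / (b - a))) = 1 := by
  have : 1 ≤ (b - x) / (b - a) := by
    rw [le_div_iff₀ (by linarith)]; linarith
  rw [min_eq_left this]; norm_num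

lemma ramp_high {a b x : ℝ} (h : a < b) (hx : b ≤ x) :
    max 0 (min 1 ((b - x) / (b - a))) = 0 := by
  have : (b - x) / (b - a) ≤ 0 := div_nonpos_of_nonpos_of_nonneg (by linarith) (by linarith)
  exact max_eq_left ((min_le_right _ _).trans this)

lemma ramp_mid {a b x : ℝ} (h : a < b) (hx : a ≤ x) (hx' : x ≤ b) :
    max 0 (min 1 ((b - x) / (b - a))) = (b - x) / (b - a) := by
  have h1 : (b - x) / (b - a) ≤ 1 := by
    rw [div_le_iff₀ (by linarith)]; linarith
  have h0 : 0 ≤ (b - x) / (b - a) := div_nonneg (by linarith) (by linarith)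
  rw [min_eq_right h1, max_eq_right h0]

lemma ramp_compl {a b x : ℝ} (h : a < b) :
    1 - (b - x) / (b - a) = (x - a) / (b - a) := by
  have : b - a ≠ 0 := by linarith
  field_simp
  ring

lemma hat_eq (K : ℕ) (hK : 2 ≤ K) (z : ℕ → ℝ) (hz : ∀ i, i + 1 < K → z i < z (i + 1))
    (i : ℕ) (hi : i < K) (x : ℝ) :
    hatFn K z i x = rampFn K z (i + 1) x - rampFn K z i x := by
  unfold hatFn rampFn
  rcases i with _ | j
  · have h0 := hz 0 (by omega)
    have hK1 : ¬ (0 = K - 1) := by omega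
    have hK2 : ¬ (K ≤ 0 + 1) := by omega
    have hK3 : 0 + 1 < K := by omega
    simp only [hK1, hK2, hK3, true_and, false_and, if_false, if_true, lt_irrefl,
      Nat.add_sub_cancel, sub_zero, Nat.succ_ne_zero]
    rcases le_or_gt x (z 0) with h | h
    · rw [if_pos h, ramp_low h0 h]
    · rw [if_neg (not_le.2 h)]
      rcases le_or_gt x (z (0 + 1)) with h' | h'
      · rw [if_pos ⟨h.le, h'⟩, ramp_mid h0 h.le h']
      · rw [if_neg (fun c => absurd c.2 (not_le.2 h')), ramp_high h0 h'.le]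
  · have h0 := hz j hi
    have hK2 : ¬ (K ≤ j + 1) := by omega
    simp only [hK2, Nat.succ_ne_zero, false_and, if_false, Nat.add_sub_cancel,
      Nat.succ_pos, true_and]
    by_cases hl : j + 1 = K - 1
    · have hK3 : K ≤ j + 1 + 1 := by omega
      have hK4 : ¬ (j + 1 + 1 < K) := by omega
      simp only [← hl, hK3, hK4, true_and, false_and, if_true, if_false]
      rcases le_or_gt (z (j + 1)) x with h | h
      · rw [if_pos h, ramp_high h0 h]; simp
      · rw [if_neg (not_le.2 h)]
        rcases le_or_gt (z j) x with h' | h'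
        · rw [if_pos ⟨h', h.le⟩, ramp_mid h0 h' h.le, ramp_compl h0]
        · rw [if_neg (fun c => absurd c.1 (not_le.2 h')), ramp_low h0 h'.le]; simp
    · have hK3 : ¬ (K ≤ j + 1 + 1) := by omega
      have hK4 : (j + 1 + 1 < K) := by omega
      have h1 := hz (j + 1) hK4
      simp only [hl, hK3, hK4, true_and, false_and, if_false]
      rcases le_or_gt (z (j + 1)) x with h | h
      · rw [ramp_high h0 h, sub_zero]
        rcases le_or_gt x (z (j + 1 + 1)) with h' | h'
        · rw [if_pos ⟨h, h'⟩, ramp_mid h1 h h']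
        · rw [if_neg (fun c => absurd c.2 (not_le.2 h')),
            if_neg (fun c => absurd c.2 (not_le.2 (h1.trans h'))), ramp_high h1 h'.le]
      · rw [if_neg (fun c => absurd c.1 (not_le.2 h)), ramp_low h1 h.le]
        rcases le_or_gt (z j) x with h' | h'
        · rw [if_pos ⟨h', h.le⟩, ramp_mid h0 h' h.le, ramp_compl h0]
        · rw [if_neg (fun c => absurd c.1 (not_le.2 h')), ramp_low h0 h'.le]; simp

lemma hat_nonneg (K : ℕ) (z : ℕ → ℝ) (i : ℕ) (x : ℝ) : 0 ≤ hatFn K z i x := by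
  unfold hatFn
  split_ifs with h1 h2 h3 h4
  · norm_num
  · norm_num
  · exact div_nonneg (by linarith [h3.2.2]) (by linarith [h3.2.2, h3.2.1])
  · exact div_nonneg (by linarith [h4.2.1]) (by linarith [h4.2.2, h4.2.1])
  · norm_num

lemma ramp_cont (K : ℕ) (z : ℕ → ℝ) (m : ℕ) : Continuous (rampFn K z m) := by
  unfold rampFn
  split_ifs <;> fun_prop

lemma ramp_nonneg (K : ℕ) (z : ℕ → ℝ) (m : ℕ) (x : ℝ) : 0 ≤ rampFn K z m x := by
  unfold rampFn
  split_ifs <;> simp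

lemma ramp_le_one (K : ℕ) (z : ℕ → ℝ) (m : ℕ) (x : ℝ) : rampFn K z m x ≤ 1 := by
  unfold rampFn
  split_ifs <;> simp

lemma ramp_int (K : ℕ) (z : ℕ → ℝ) (m : ℕ) (ν : Measure ℝ) [IsProbabilityMeasure ν] :
    Integrable (rampFn K z m) ν := by
  refine Integrable.of_bound (ramp_cont K z m).aestronglyMeasurable 1 (ae_of_all _ fun x => ?_)
  rw [Real.norm_eq_abs, abs_of_nonneg (ramp_nonneg K z m x)]
  exact ramp_le_one K z m x

lemma ramp_mono (K : ℕ) (z : ℕ → ℝ) (hz : ∀ i, i + 1 < K → z i < z (i + 1)) (m : ℕ)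
    (ν₁ ν₂ : Measure ℝ) [IsProbabilityMeasure ν₁] [IsProbabilityMeasure ν₂]
    (hdom : ∀ y : ℝ, cdfFn ν₂ y ≤ cdfFn ν₁ y) :
    ∫ x, rampFn K z m x ∂ν₂ ≤ ∫ x, rampFn K z m x ∂ν₁ := by
  by_cases h0 : m = 0
  · simp [rampFn, h0]
  by_cases h1 : K ≤ m
  · simp [rampFn, h0, h1]
  have hd : z (m - 1) < z m := by
    have := hz (m - 1) (by omega)
    rwa [Nat.sub_add_cancel (by omega)] at this
  rw [(ramp_int K z m ν₂).integral_eq_integral_meas_le (ae_of_all _ (ramp_nonneg K z m)),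
    (ramp_int K z m ν₁).integral_eq_integral_meas_le (ae_of_all _ (ramp_nonneg K z m))]
  have key : ∀ t : ℝ, 0 < t → {x | t ≤ rampFn K z m x} =
      if t ≤ 1 then Iic (z m - t * (z m - z (m - 1))) else ∅ := by
    intro t ht
    ext x
    simp only [rampFn, h0, h1, if_false, mem_setOf_eq, le_max_iff, le_min_iff]
    rw [le_div_iff₀ (by linarith)]
    split_ifs with h
    · simp only [mem_Iic]
      constructor
      · rintro (h' | h')
        · linarith
        · linarith [h'.2]
      · intro h'; right; exact ⟨h, by linarith⟩
    · simp only [mem_empty_iff_false, iff_false]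
      rintro (h' | h')
      · linarith
      · exact h h'.1
  have anti : ∀ ν : Measure ℝ, [IsProbabilityMeasure ν] →
      IntegrableOn (fun t => ν.real {x | t ≤ rampFn K z m x}) (Ioi 0) := by
    intro ν _
    have hanti : Antitone (fun t => ν.real {x | t ≤ rampFn K z m x}) := fun s t hst =>
      measureReal_mono (fun x hx => le_trans hst hx)
    have : Integrable (indicator (Ioc (0:ℝ) 1) (fun _ => (1:ℝ))) (volume.restrict (Ioi 0)) := by
      refine (Integrable.restrict ?_)
      rw [integrable_indicator_iff measurableSet_Ioc]
      exact integrableOn_const (by simp)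
    refine this.mono' hanti.measurable.aestronglyMeasurable ?_
    refine (ae_restrict_mem measurableSet_Ioi).mono fun t ht => ?_
    rw [Real.norm_eq_abs, abs_of_nonneg measureReal_nonneg]
    by_cases h : t ≤ 1
    · rw [indicator_of_mem (show t ∈ Ioc (0:ℝ) 1 from ⟨ht, h⟩)]
      exact measureReal_le_one
    · rw [key t ht, if_neg h, measureReal_empty]
      exact indicator_nonneg (fun _ _ => zero_le_one) _
  refine setIntegral_mono_on (anti ν₂) (anti ν₁) measurableSet_Ioi fun t ht => ?_
  rw [key t ht]
  split_ifs
  · exact hdom _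
  · simp

lemma grid_split (K : ℕ) (z : ℕ → ℝ) (hz : ∀ i, i + 1 < K → z i < z (i + 1)) (y : ℝ) :
    ∀ k, k ≤ K → ∃ n ≤ k, ∀ i < k, (z i ≤ y ↔ i < n) := by
  intro k
  induction k with
  | zero => intro _; exact ⟨0, le_rfl, by simp⟩
  | succ k ih =>
    intro hk
    obtain ⟨n, hn, h⟩ := ih (by omega)
    by_cases hy : z k ≤ y
    · have hnk : n = k := by
        by_contra hne
        have h1 := hz (k - 1) (by omega)
        rw [Nat.sub_add_cancel (by omega)] at h1
        have := (h (k - 1) (by omega)).1 (by linarith)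
        omega
      refine ⟨k + 1, le_rfl, fun i hi => ?_⟩
      refine ⟨fun _ => hi, fun _ => ?_⟩
      rcases Nat.lt_succ_iff_lt_or_eq.1 hi with h' | h'
      · exact (h i h').2 (by omega)
      · rw [h']; exact hy
    · refine ⟨n, by omega, fun i hi => ?_⟩
      rcases Nat.lt_succ_iff_lt_or_eq.1 hi with h' | h'
      · exact h i h'
      · rw [h']; exact ⟨fun c => absurd c hy, fun c => by omega⟩

lemma cdf_proj (K : ℕ) (hK : 2 ≤ K) (z : ℕ → ℝ) (hz : ∀ i, i + 1 < K → z i < z (i + 1))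
    (y : ℝ) (n : ℕ) (hn : n ≤ K) (h : ∀ i < K, (z i ≤ y ↔ i < n))
    (ν : Measure ℝ) [IsProbabilityMeasure ν] :
    cdfFn (cramerProj K z ν) y = ∫ x, rampFn K z n x ∂ν := by
  have e1 : ∀ i < K, ∫ x, hatFn K z i x ∂ν
      = ∫ x, rampFn K z (i + 1) x ∂ν - ∫ x, rampFn K z i x ∂ν := by
    intro i hi
    rw [← integral_sub (ramp_int K z _ ν) (ramp_int K z _ ν)]
    exact integral_congr_ae (ae_of_all _ fun x => hat_eq K hK z hz i hi x)
  have e2 : (cramerProj K z ν) (Iic y)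
      = ∑ i ∈ Finset.range n, ENNReal.ofReal (∫ w, hatFn K z i w ∂ν) := by
    unfold cramerProj
    rw [Measure.finsetSum_apply]
    rw [← Finset.sum_subset (Finset.range_subset_range.2 hn)]
    · refine Finset.sum_congr rfl fun i hi => ?_
      have hi' := Finset.mem_range.1 hi
      have : z i ∈ Iic y := (h i (by omega)).2 hi'
      simp only [Measure.smul_apply, smul_eq_mul, Measure.dirac_apply' _ measurableSet_Iic]
      rw [indicator_of_mem this]; simp
    · intro i hi hi2
      have : z i ∉ Iic y := fun c =>
        hi2 (Finset.mem_range.2 ((h i (Finset.mem_range.1 hi)).1 c))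
      simp only [Measure.smul_apply, smul_eq_mul, Measure.dirac_apply' _ measurableSet_Iic]
      rw [indicator_of_notMem this]; simp
  unfold cdfFn
  rw [e2, ← ENNReal.ofReal_sum_of_nonneg (fun i _ => integral_nonneg (hat_nonneg K z i)),
    ENNReal.toReal_ofReal (Finset.sum_nonneg fun i _ => integral_nonneg (hat_nonneg K z i)),
    Finset.sum_congr rfl (fun i hi => e1 i (by have := Finset.mem_range.1 hi; omega)),
    Finset.sum_range_sub (fun i => ∫ x, rampFn K z i x ∂ν)]
  simp [rampFn]

/-- The Cramér projection is monotone with respect to stochastic dominance. -/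
theorem cramerProj_monotone
    (K : ℕ) (hK : 2 ≤ K) (z : ℕ → ℝ) (hz : ∀ i, i + 1 < K → z i < z (i + 1))
    (ν₁ ν₂ : Measure ℝ) [IsProbabilityMeasure ν₁] [IsProbabilityMeasure ν₂]
    (hdom : ∀ y : ℝ, cdfFn ν₂ y ≤ cdfFn ν₁ y) :
    ∀ y : ℝ, cdfFn (cramerProj K z ν₂) y ≤ cdfFn (cramerProj K z ν₁) y := by
  intro y
  obtain ⟨n, hn, h⟩ := grid_split K z hz y K le_rfl
  rw [cdf_proj K hK z hz y n hn h ν₁, cdf_proj K hK z hz y n hn h ν₂]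
  exact ramp_mono K z hz n ν₁ ν₂ hdom

end
end

section
/- Let z₁ < ⋯ < z_K (K ≥ 2) be a grid with Cramér projection Π_C. For any probability measure ν on ℝ supported on [z₁, z_K], the squared Cramér distance between ν and its projection satisfies ℓ₂²(Π_C ν, ν) ≤ Σ_{i=1}^{K−1} (z_{i+1} − z_i)(F_ν(z_{i+1}) − F_ν(z_i))² ≤ max_{1 ≤ i < K} (z_{i+1} − z_i), where F_ν is the CDF of ν. -/
open MeasureTheory Filter Set

noncomputable section

lemma grid_mono {K : ℕ} {z : ℕ → ℝ} (hz : ∀ i, i + 1 < K → z i < z (i + 1)) {i j : ℕ}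
    (hij : i ≤ j) (hj : j < K) : z i ≤ z j := by
  induction j, hij using Nat.le_induction with
  | base => exact le_rfl
  | succ n hn ih => exact (ih (by omega)).trans (hz n hj).le

lemma grid_strict {K : ℕ} {z : ℕ → ℝ} (hz : ∀ i, i + 1 < K → z i < z (i + 1)) {i j : ℕ}
    (hij : i < j) (hj : j < K) : z i < z j :=
  (hz i (by omega)).trans_le (grid_mono hz hij hj)

def gFn (z : ℕ → ℝ) (k : ℕ) (x : ℝ) : ℝ :=
  if x ≤ z k then 1 else if x ≤ z (k + 1) then (z (k + 1) - x) / (z (k + 1) - z k) else 0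

lemma hat_zero {K : ℕ} {z : ℕ → ℝ} (hz : ∀ i, i + 1 < K → z i < z (i + 1)) (hK : 2 ≤ K)
    (x : ℝ) : hatFn K z 0 x = gFn z 0 x := by
  unfold hatFn gFn
  have h1 : ¬ (0 = K - 1) := by omega
  have h2 : 0 + 1 < K := by omega
  by_cases h : x ≤ z 0
  · simp [h]
  · have : z 0 ≤ x := by linarith
    simp [h, h1, this]
    simp [show 1 < K by omega]

lemma hat_succ {K : ℕ} {z : ℕ → ℝ} (hz : ∀ i, i + 1 < K → z i < z (i + 1)) (k : ℕ)
    (hk : k + 2 < K) (x : ℝ) : hatFn K z (k + 1) x = gFn z (k + 1) x - gFn z k x := by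
  unfold hatFn gFn
  have h1 : ¬ (k + 1 = K - 1) := by omega
  have z1 := hz k (by omega)
  have z2 := hz (k + 1) (by omega)
  have e1 : z (k + 1) - z k ≠ 0 := by linarith
  have e2 : z (k + 1 + 1) - z (k + 1) ≠ 0 := by linarith
  rw [if_neg (by omega), if_neg (by tauto)]
  simp only [Nat.add_sub_cancel]
  have hk' : k + 1 + 1 < K := hk
  have hk0 : 0 < k + 1 := by omega
  simp only [hk', hk0, true_and]
  rcases lt_trichotomy x (z (k + 1)) with h | h | h
  · rw [if_neg (by intro h'; linarith [h'.1]), if_pos h.le]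
    rcases lt_trichotomy x (z k) with h' | h' | h'
    · rw [if_neg (by intro h''; linarith [h''.1]), if_pos h'.le]; ring
    · subst h'; rw [if_pos ⟨le_rfl, h.le⟩, if_pos le_rfl]; simp
    · rw [if_pos ⟨h'.le, h.le⟩, if_neg (by linarith), if_pos h.le]; field_simp; ring
  · subst h
    rw [if_pos ⟨le_rfl, z2.le⟩, if_pos le_rfl, if_neg (by linarith), if_pos le_rfl]
    rw [div_self e2]; simp
  · rw [if_neg (show ¬ x ≤ z (k + 1) by linarith), if_neg (show ¬ x ≤ z k by linarith),
      if_neg (show ¬ x ≤ z (k + 1) by linarith)]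
    by_cases h' : x ≤ z (k + 1 + 1)
    · rw [if_pos ⟨h.le, h'⟩, if_pos h']; ring
    · rw [if_neg (by tauto), if_neg (by intro h''; linarith [h''.2]), if_neg h']; ring

lemma hat_last {K : ℕ} {z : ℕ → ℝ} (hz : ∀ i, i + 1 < K → z i < z (i + 1)) (k : ℕ)
    (hk : k + 2 = K) (x : ℝ) : hatFn K z (k + 1) x = 1 - gFn z k x := by
  subst hk
  unfold hatFn gFn
  have z1 := hz k (by omega)
  have e1 : z (k + 1) - z k ≠ 0 := by linarith
  have ek : k + 2 - 1 = k + 1 := by omega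
  rw [if_neg (by omega), ek]
  simp only [Nat.add_sub_cancel]
  have hk' : ¬ (k + 1 + 1 < k + 2) := by omega
  have hk0 : 0 < k + 1 := by omega
  simp only [hk', hk0, true_and, false_and, if_false]
  rcases lt_trichotomy x (z (k + 1)) with h | h | h
  · rw [if_neg (by linarith)]
    rcases lt_trichotomy x (z k) with h' | h' | h'
    · rw [if_neg (by intro h''; linarith [h''.1]), if_pos h'.le]; ring
    · subst h'; rw [if_pos ⟨le_rfl, h.le⟩, if_pos le_rfl]; simp
    · rw [if_pos ⟨h'.le, h.le⟩, if_neg (by linarith), if_pos h.le]; field_simp; ring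
  · subst h
    rw [if_pos le_rfl, if_neg (by linarith), if_pos le_rfl]
    simp
  · rw [if_pos h.le, if_neg (by linarith), if_neg (by linarith)]; ring

lemma hat_sum {K : ℕ} {z : ℕ → ℝ} (hz : ∀ i, i + 1 < K → z i < z (i + 1)) (k : ℕ)
    (hk : k + 1 < K) (x : ℝ) : ∑ i ∈ Finset.range (k + 1), hatFn K z i x = gFn z k x := by
  induction k with
  | zero => simp [hat_zero hz (by omega : 2 ≤ K)]
  | succ n ih => rw [Finset.sum_range_succ, ih (by omega), hat_succ hz n hk]; ring

lemma hat_sum_all {K : ℕ} {z : ℕ → ℝ} (hz : ∀ i, i + 1 < K → z i < z (i + 1)) (hK : 2 ≤ K)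
    (x : ℝ) : ∑ i ∈ Finset.range K, hatFn K z i x = 1 := by
  obtain ⟨k, rfl⟩ : ∃ k, K = k + 2 := ⟨K - 2, by omega⟩
  rw [Finset.sum_range_succ, hat_sum hz k (by omega), hat_last hz k rfl]; ring

lemma hat_bd {K : ℕ} {z : ℕ → ℝ} (hz : ∀ i, i + 1 < K → z i < z (i + 1)) (i : ℕ) (hi : i < K)
    (x : ℝ) : 0 ≤ hatFn K z i x ∧ hatFn K z i x ≤ 1 := by
  unfold hatFn
  split_ifs with h1 h2 h3 h4
  · norm_num
  · norm_num
  · have := hz i h3.1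
    exact ⟨div_nonneg (by linarith) (by linarith), div_le_one_of_le₀ (by linarith) (by linarith)⟩
  · have := hz (i - 1) (by omega)
    rw [Nat.sub_add_cancel h4.1] at this
    exact ⟨div_nonneg (by linarith) (by linarith), div_le_one_of_le₀ (by linarith) (by linarith)⟩
  · norm_num

lemma hat_meas (K : ℕ) (z : ℕ → ℝ) (i : ℕ) : Measurable (hatFn K z i) := by
  unfold hatFn
  refine Measurable.ite ((MeasurableSet.const _).inter measurableSet_Iic) measurable_const ?_
  refine Measurable.ite ((MeasurableSet.const _).inter measurableSet_Ici) measurable_const ?_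
  refine Measurable.ite ((MeasurableSet.const _).inter (measurableSet_Ici.inter measurableSet_Iic))
    (by fun_prop) ?_
  exact Measurable.ite ((MeasurableSet.const _).inter (measurableSet_Ici.inter measurableSet_Iic))
    (by fun_prop) measurable_const

lemma hat_int {K : ℕ} {z : ℕ → ℝ} (hz : ∀ i, i + 1 < K → z i < z (i + 1)) (i : ℕ) (hi : i < K)
    (ν : Measure ℝ) [IsProbabilityMeasure ν] : Integrable (hatFn K z i) ν := by
  refine Integrable.of_bound (hat_meas K z i).aestronglyMeasurable 1 (ae_of_all _ fun x => ?_)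
  have := hat_bd hz i hi x
  rw [Real.norm_eq_abs, abs_of_nonneg this.1]
  exact this.2

lemma cdf_proj_s12 {K : ℕ} {z : ℕ → ℝ} (hz : ∀ i, i + 1 < K → z i < z (i + 1))
    (ν : Measure ℝ) [IsProbabilityMeasure ν] (x : ℝ) :
    cdfFn (cramerProj K z ν) x =
      ∑ i ∈ Finset.range K, if z i ≤ x then ∫ w, hatFn K z i w ∂ν else 0 := by
  unfold cdfFn cramerProj
  rw [Measure.finsetSum_apply, ENNReal.toReal_sum]
  · refine Finset.sum_congr rfl fun i hi => ?_
    have h0 : 0 ≤ ∫ w, hatFn K z i w ∂ν :=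
      integral_nonneg fun w => (hat_bd hz i (Finset.mem_range.1 hi) w).1
    rw [Measure.smul_apply, Measure.dirac_apply' _ measurableSet_Iic]
    by_cases h : z i ≤ x
    · simp [h, h0]
    · simp [h]
  · intro i hi
    rw [Measure.smul_apply, Measure.dirac_apply' _ measurableSet_Iic]
    by_cases h : z i ≤ x
    · simp [h]
    · simp [h]

lemma cdf_proj_mid {K : ℕ} {z : ℕ → ℝ} (hz : ∀ i, i + 1 < K → z i < z (i + 1))
    (ν : Measure ℝ) [IsProbabilityMeasure ν] (x : ℝ) (k : ℕ) (hk : k + 1 < K) (h1 : z k ≤ x)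
    (h2 : x < z (k + 1)) :
    cdfFn (cramerProj K z ν) x = ∫ w, gFn z k w ∂ν := by
  rw [cdf_proj_s12 hz]
  have : ∀ w, gFn z k w = ∑ i ∈ Finset.range (k + 1), hatFn K z i w := fun w =>
    (hat_sum hz k hk w).symm
  simp_rw [this]
  rw [integral_finsetSum _ (fun i hi => hat_int hz i
    (by have := Finset.mem_range.1 hi; omega) ν)]
  rw [← Finset.sum_subset (s₁ := Finset.range (k + 1)) (Finset.range_subset_range.2 hk.le)]
  · refine Finset.sum_congr rfl fun i hi => ?_
    have := Finset.mem_range.1 hi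
    rw [if_pos ((grid_mono hz (by omega : i ≤ k) (by omega)).trans h1)]
  · intro i hi hi'
    rw [Finset.mem_range] at hi hi'
    rw [if_neg]
    have := grid_mono hz (by omega : k + 1 ≤ i) hi
    linarith

lemma cdf_proj_hi {K : ℕ} {z : ℕ → ℝ} (hz : ∀ i, i + 1 < K → z i < z (i + 1)) (hK : 2 ≤ K)
    (ν : Measure ℝ) [IsProbabilityMeasure ν] (x : ℝ) (h1 : z (K - 1) ≤ x) :
    cdfFn (cramerProj K z ν) x = 1 := by
  rw [cdf_proj_s12 hz]
  have : ∑ i ∈ Finset.range K, ∫ w, hatFn K z i w ∂ν = 1 := by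
    rw [← integral_finsetSum _ (fun i hi => hat_int hz i (Finset.mem_range.1 hi) ν)]
    simp_rw [hat_sum_all hz hK]
    simp
  rw [← this]
  refine Finset.sum_congr rfl fun i hi => ?_
  have := Finset.mem_range.1 hi
  rw [if_pos ((grid_mono hz (by omega : i ≤ K - 1) (by omega)).trans h1)]

lemma cdf_proj_lo {K : ℕ} {z : ℕ → ℝ} (hz : ∀ i, i + 1 < K → z i < z (i + 1))
    (ν : Measure ℝ) [IsProbabilityMeasure ν] (x : ℝ) (h1 : x < z 0) :
    cdfFn (cramerProj K z ν) x = 0 := by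
  rw [cdf_proj_s12 hz]
  refine Finset.sum_eq_zero fun i hi => ?_
  have := grid_mono hz (Nat.zero_le i) (Finset.mem_range.1 hi)
  rw [if_neg (by linarith)]

lemma cdfFn_mono (ν : Measure ℝ) [IsProbabilityMeasure ν] : Monotone (cdfFn ν) := by
  intro a b h
  exact ENNReal.toReal_mono (measure_ne_top _ _) (measure_mono (Iic_subset_Iic.2 h))

lemma cdfFn_nonneg (ν : Measure ℝ) (x : ℝ) : 0 ≤ cdfFn ν x := ENNReal.toReal_nonneg

lemma cdfFn_le_one (ν : Measure ℝ) [IsProbabilityMeasure ν] (x : ℝ) : cdfFn ν x ≤ 1 :=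
  ENNReal.toReal_le_of_le_ofReal zero_le_one (by simpa using prob_le_one)

lemma cdfFn_eq_integral (ν : Measure ℝ) (x : ℝ) :
    cdfFn ν x = ∫ w, (Iic x).indicator 1 w ∂ν := by
  rw [integral_indicator_one measurableSet_Iic]; rfl

lemma g_bounds {K : ℕ} {z : ℕ → ℝ} (hz : ∀ i, i + 1 < K → z i < z (i + 1))
    (ν : Measure ℝ) [IsProbabilityMeasure ν] (k : ℕ) (hk : k + 1 < K) :
    cdfFn ν (z k) ≤ ∫ w, gFn z k w ∂ν ∧ ∫ w, gFn z k w ∂ν ≤ cdfFn ν (z (k + 1)) := by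
  have hg : Integrable (gFn z k) ν := by
    have : gFn z k = fun w => ∑ i ∈ Finset.range (k + 1), hatFn K z i w :=
      funext fun w => (hat_sum hz k hk w).symm
    rw [this]
    exact integrable_finsetSum _ fun i hi => hat_int hz i
      (by have := Finset.mem_range.1 hi; omega) ν
  have hI : ∀ y, Integrable ((Iic y).indicator (1 : ℝ → ℝ)) ν := fun y =>
    (integrable_const (1 : ℝ)).indicator measurableSet_Iic
  have z1 := hz k hk
  rw [cdfFn_eq_integral, cdfFn_eq_integral]
  constructor
  · refine integral_mono (hI _) hg fun w => ?_
    unfold gFn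
    by_cases h : w ≤ z k
    · simp [h]
    · simp only [indicator, mem_Iic, h, if_false]
      split_ifs
      · exact div_nonneg (by linarith) (by linarith)
      · exact le_rfl
  · refine integral_mono hg (hI _) fun w => ?_
    unfold gFn
    by_cases h : w ≤ z (k + 1)
    · simp only [indicator, mem_Iic, h, if_true, Pi.one_apply]
      split_ifs
      · exact le_rfl
      · exact div_le_one_of_le₀ (by linarith) (by linarith)
    · have : ¬ w ≤ z k := by linarith
      simp [h, this]

lemma exists_cell {K : ℕ} (hK : 2 ≤ K) (z : ℕ → ℝ) (x : ℝ) (h0 : z 0 ≤ x)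
    (h1 : x < z (K - 1)) : ∃ k, k + 1 < K ∧ z k ≤ x ∧ x < z (k + 1) := by
  by_contra! h
  have : ∀ n, n < K → z n ≤ x := by
    intro n
    induction n with
    | zero => intro _; exact h0
    | succ n ih => intro hn; exact h n hn (ih (by omega))
  linarith [this (K - 1) (by omega)]

lemma pointwise_bd {K : ℕ} {z : ℕ → ℝ} (hz : ∀ i, i + 1 < K → z i < z (i + 1)) (hK : 2 ≤ K)
    (ν : Measure ℝ) [IsProbabilityMeasure ν] (hν : ν (Set.Icc (z 0) (z (K - 1)))ᶜ = 0) (x : ℝ) :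
    (cdfFn (cramerProj K z ν) x - cdfFn ν x) ^ 2 ≤
      ∑ i ∈ Finset.range (K - 1), (Ico (z i) (z (i + 1))).indicator
        (fun _ => (cdfFn ν (z (i + 1)) - cdfFn ν (z i)) ^ 2) x := by
  have hnn : ∀ i ∈ Finset.range (K - 1), 0 ≤ (Ico (z i) (z (i + 1))).indicator
        (fun _ => (cdfFn ν (z (i + 1)) - cdfFn ν (z i)) ^ 2) x :=
    fun i _ => indicator_nonneg (fun _ _ => sq_nonneg _) x
  rcases lt_or_ge x (z 0) with h0 | h0
  · have : cdfFn ν x = 0 := by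
      unfold cdfFn
      rw [measure_mono_null _ hν]
      · simp
      · intro w hw hw'
        exact absurd (hw'.1.trans hw) (not_le.2 h0)
    rw [cdf_proj_lo hz ν x h0, this]
    simpa using Finset.sum_nonneg hnn
  rcases lt_or_ge x (z (K - 1)) with h1 | h1
  · obtain ⟨k, hk, a, b⟩ := exists_cell hK z x h0 h1
    refine le_trans ?_ (Finset.single_le_sum hnn (Finset.mem_range.2 (by omega : k < K - 1)))
    rw [indicator_of_mem (show x ∈ Ico (z k) (z (k + 1)) from ⟨a, b⟩), cdf_proj_mid hz ν x k hk a b]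
    obtain ⟨g1, g2⟩ := g_bounds hz ν k hk
    have m1 := cdfFn_mono ν a
    have m2 := cdfFn_mono ν b.le
    apply sq_le_sq'  <;> linarith
  · have : cdfFn ν x = 1 := by
      unfold cdfFn
      rw [(prob_compl_eq_zero_iff measurableSet_Iic).1]
      · simp
      · refine measure_mono_null ?_ hν
        intro w hw hw'
        exact hw (hw'.2.trans h1)
    rw [cdf_proj_hi hz hK ν x h1, this]
    simpa using Finset.sum_nonneg hnn

/-- Bound on the squared Cramér distance between a measure supported on
[z₁, z_K] and its Cramér projection. -/
theorem cramerProj_sq_dist_bound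
    (K : ℕ) (hK : 2 ≤ K) (z : ℕ → ℝ) (hz : ∀ i, i + 1 < K → z i < z (i + 1))
    (ν : Measure ℝ) [IsProbabilityMeasure ν] (hν : ν (Set.Icc (z 0) (z (K - 1)))ᶜ = 0) :
    (cramerDist (cramerProj K z ν) ν) ^ 2
        ≤ ∑ i ∈ Finset.range (K - 1),
            (z (i + 1) - z i) * (cdfFn ν (z (i + 1)) - cdfFn ν (z i)) ^ 2 ∧
    ∑ i ∈ Finset.range (K - 1),
        (z (i + 1) - z i) * (cdfFn ν (z (i + 1)) - cdfFn ν (z i)) ^ 2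
      ≤ ⨆ i : Fin (K - 1), (z (i.1 + 1) - z i.1) := by
  constructor
  · unfold cramerDist
    rw [Real.sq_sqrt (integral_nonneg fun x => sq_nonneg _)]
    have hint : ∀ i ∈ Finset.range (K - 1), Integrable (fun x => (Ico (z i) (z (i + 1))).indicator
        (fun _ => (cdfFn ν (z (i + 1)) - cdfFn ν (z i)) ^ 2) x) :=
      fun i _ => (integrable_indicator_iff measurableSet_Ico).2
        (integrableOn_const (by simp))
    refine (integral_mono_of_nonneg (ae_of_all _ fun x => sq_nonneg _)
      (integrable_finsetSum _ hint) (ae_of_all _ (pointwise_bd hz hK ν hν))).trans ?_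
    rw [integral_finsetSum _ hint]
    refine le_of_eq (Finset.sum_congr rfl fun i hi => ?_)
    have := hz i (by have := Finset.mem_range.1 hi; omega)
    rw [integral_indicator measurableSet_Ico, setIntegral_const]
    simp [Measure.real, this.le]
  · have hb : BddAbove (Set.range fun i : Fin (K - 1) => z (i.1 + 1) - z i.1) :=
      (Set.finite_range _).bddAbove
    set M := ⨆ i : Fin (K - 1), (z (i.1 + 1) - z i.1) with hM
    have hM0 : 0 ≤ M := by
      have h := le_ciSup hb ⟨0, by omega⟩
      have := hz 0 (by omega)
      simp only at h
      linarith
    calc _ ≤ ∑ i ∈ Finset.range (K - 1), M * (cdfFn ν (z (i + 1)) - cdfFn ν (z i)) := by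
          refine Finset.sum_le_sum fun i hi => ?_
          have hi := Finset.mem_range.1 hi
          have hd := hz i (by omega)
          have h : z (i + 1) - z i ≤ M := le_ciSup hb ⟨i, hi⟩
          have c1 := cdfFn_mono ν hd.le
          have c2 := cdfFn_nonneg ν (z i)
          have c3 := cdfFn_le_one ν (z (i + 1))
          refine mul_le_mul h ?_ (sq_nonneg _) hM0
          nlinarith
      _ = M * (cdfFn ν (z (K - 1)) - cdfFn ν (z 0)) := by
          rw [← Finset.mul_sum, Finset.sum_range_sub (fun i => cdfFn ν (z i))]
      _ ≤ M := by
          have c2 := cdfFn_nonneg ν (z 0)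
          have c3 := cdfFn_le_one ν (z (K - 1))
          nlinarith

end
end
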